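/- Let n ≥ 5 and let a : Fin n → ℚ with a i ≠ 0 for every i. If the diagonal quadratic form q(x) = ∑ i, a i * (x i)^2 is indefinite, i.e. there exist indices i and j with a i > 0 and a j < 0, then q is isotropic over ℚ: there exists x : Fin n → ℚ with x ≠ 0 and ∑ i, a i * (x i)^2 = 0. (Meyer's theorem.) -/

import Mathlib

/-- Isotropy of the ternary diagonal form `⟨a, b, c⟩` over a field. -/
def TernaryIsotropic {K : Type*} [Field K] (a b c : K) : Prop :=
  ∃ x y z : K, (x ≠ 0 ∨ y ≠ 0 ∨ z ≠ 0) ∧ a * x ^ 2 + b * y ^ 2 + c * z ^ 2 = 0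

/-- Isotropy of the diagonal form with coefficients `a` over a field. -/
def DiagonalIsotropic {ι K : Type*} [Fintype ι] [Field K] (a : ι → K) : Prop :=
  ∃ x : ι → K, x ≠ 0 ∧ ∑ i, a i * x i ^ 2 = 0

section Field

variable {K : Type*} [Field K]

theorem TernaryIsotropic.swap {a b c : K} (h : TernaryIsotropic a b c) :
    TernaryIsotropic a c b := by
  obtain ⟨x, y, z, hne, h⟩ := h
  exact ⟨x, z, y, by tauto, by linear_combination h⟩

theorem TernaryIsotropic.rotate {a b c : K} (h : TernaryIsotropic a b c) :
    TernaryIsotropic b c a := by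
  obtain ⟨x, y, z, hne, h⟩ := h
  exact ⟨y, z, x, by tauto, by linear_combination h⟩

/-- Isotropy depends on a coefficient only up to squares. -/
theorem TernaryIsotropic.congr_right {a b c c' : K} (hc' : c' ≠ 0) (hc : c ≠ 0)
    (hsq : IsSquare (c * c')) (h : TernaryIsotropic a b c) : TernaryIsotropic a b c' := by
  obtain ⟨x, y, z, hne, h⟩ := h
  obtain ⟨r, hr⟩ := hsq
  have hr0 : r ≠ 0 := by
    rintro rfl
    simp [hc, hc'] at hr
  refine ⟨x, y, z * r / c', ?_, ?_⟩
  · rcases hne with hx | hy | hz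
    · exact .inl hx
    · exact .inr (.inl hy)
    · exact .inr (.inr (by positivity))
  · have : c' * (z * r / c') ^ 2 = c * z ^ 2 := by
      field_simp
      linear_combination (-z ^ 2) * hr
    rw [this, h]

theorem ternaryIsotropic_of_isSquare_neg_mul {a b : K} (c : K) (ha : a ≠ 0)
    (h : IsSquare (-(a * b))) : TernaryIsotropic a b c := by
  obtain ⟨r, hr⟩ := h
  exact ⟨r, a, 0, .inr (.inl ha), by linear_combination (-a) * hr⟩

/-- Scaling the form by `a` and absorbing `a ^ 2` into the first variable. -/
theorem ternaryIsotropic_one_iff {a b c : K} (ha : a ≠ 0) :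
    TernaryIsotropic 1 (a * b) (a * c) ↔ TernaryIsotropic a b c := by
  constructor
  · rintro ⟨x, y, z, hne, h⟩
    refine ⟨x / a, y, z, by simpa [ha] using hne, ?_⟩
    field_simp
    linear_combination h
  · rintro ⟨x, y, z, hne, h⟩
    exact ⟨a * x, y, z, by simpa [ha] using hne, by linear_combination a * h⟩

/-- Multiplicativity of the norm form `z ^ 2 + a * x ^ 2`. -/
theorem TernaryIsotropic.of_mul_eq_norm {a b b' t : K} (hb : b ≠ 0)
    (ht : t ^ 2 + a = b * b') (h : TernaryIsotropic 1 a b) : TernaryIsotropic 1 a b' := by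
  obtain ⟨z, x, y, hne, h⟩ := h
  by_cases hy : y = 0
  · subst hy
    exact ⟨z, x, 0, hne, by linear_combination h⟩
  · exact ⟨z * t - a * x, z + t * x, b * y, .inr (.inr (mul_ne_zero hb hy)), by
      linear_combination (t ^ 2 + a) * h - b * y ^ 2 * ht⟩

/-- An isotropic rank five form splits into three isotropic ternary forms. -/
theorem exists_ternaryIsotropic_of_diagonalIsotropic {a b c d e : K} (ha : a ≠ 0) (hc : c ≠ 0)
    (hd : d ≠ 0) (h : DiagonalIsotropic ![a, b, c, d, e]) :
    ∃ t s : K, t ≠ 0 ∧ s ≠ 0 ∧ TernaryIsotropic a b (-t) ∧ TernaryIsotropic c s t ∧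
      TernaryIsotropic d e (-s) := by
  obtain ⟨x, hx, h⟩ := h
  simp only [Fin.sum_univ_five, Matrix.cons_val] at h
  have hne : x 0 ≠ 0 ∨ x 1 ≠ 0 ∨ x 2 ≠ 0 ∨ x 3 ≠ 0 ∨ x 4 ≠ 0 := by
    by_contra! hall
    apply hx
    funext i
    fin_cases i <;> simp [hall]
  have ha' : TernaryIsotropic a b (-a) := ⟨1, 0, 1, by simp, by ring⟩
  have hd' : TernaryIsotropic d e (-d) := ⟨1, 0, 1, by simp, by ring⟩
  by_cases ht : a * x 0 ^ 2 + b * x 1 ^ 2 = 0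
  · by_cases hab : x 0 ≠ 0 ∨ x 1 ≠ 0
    · exact ⟨-c, d, neg_ne_zero.2 hc, hd, ⟨x 0, x 1, 0, by tauto, by linear_combination ht⟩,
        ⟨1, 0, 1, by simp, by ring⟩, hd'⟩
    by_cases hs : d * x 3 ^ 2 + e * x 4 ^ 2 = 0
    · by_cases hde : x 3 ≠ 0 ∨ x 4 ≠ 0
      · exact ⟨a, -c, ha, neg_ne_zero.2 hc, ha', ⟨1, 1, 0, by simp, by ring⟩,
          ⟨x 3, x 4, 0, by tauto, by linear_combination hs⟩⟩
      · have h2 : x 2 ≠ 0 := by tauto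
        exact absurd (show c * x 2 ^ 2 = 0 by linear_combination h - ht - hs) (by simp [hc, h2])
    · exact ⟨a, _, ha, hs, ha', ⟨x 2, 1, 0, by simp, by linear_combination h - ht⟩,
        ⟨x 3, x 4, 1, by simp, by ring⟩⟩
  · have hab : TernaryIsotropic a b (-(a * x 0 ^ 2 + b * x 1 ^ 2)) := ⟨x 0, x 1, 1, by simp, by ring⟩
    by_cases hs : d * x 3 ^ 2 + e * x 4 ^ 2 = 0
    · exact ⟨_, d, ht, hd, hab, ⟨x 2, 0, 1, by simp, by linear_combination h - hs⟩, hd'⟩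
    · exact ⟨_, _, ht, hs, hab, ⟨x 2, 1, 1, by simp, by linear_combination h⟩,
        ⟨x 3, x 4, 1, by simp, by ring⟩⟩

/-- Three isotropic ternary forms glue to an isotropic rank five form. -/
theorem diagonalIsotropic_of_ternaryIsotropic {a b c d e t s : K} (ht : t ≠ 0) (hs : s ≠ 0)
    (h₁ : TernaryIsotropic a b (-t)) (h₂ : TernaryIsotropic c s t)
    (h₃ : TernaryIsotropic d e (-s)) : DiagonalIsotropic ![a, b, c, d, e] := by
  obtain ⟨x, y, z, hne₁, h₁⟩ := h₁
  obtain ⟨u, v, w, hne₃, h₃⟩ := h₃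
  obtain ⟨q, r, p, hne₂, h₂⟩ := h₂
  suffices H : ∃ X Y Z U V : K, (X ≠ 0 ∨ Y ≠ 0 ∨ Z ≠ 0 ∨ U ≠ 0 ∨ V ≠ 0) ∧
      a * X ^ 2 + b * Y ^ 2 + c * Z ^ 2 + d * U ^ 2 + e * V ^ 2 = 0 by
    obtain ⟨X, Y, Z, U, V, hne, H⟩ := H
    refine ⟨![X, Y, Z, U, V], fun h0 => ?_, by simpa [Fin.sum_univ_five] using H⟩
    have := congrFun h0
    simp [Fin.forall_fin_succ] at this
    simp [this] at hne
  by_cases hz : z = 0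
  · subst hz
    exact ⟨x, y, 0, 0, 0, by simpa using hne₁, by linear_combination h₁⟩
  by_cases hw : w = 0
  · subst hw
    exact ⟨0, 0, 0, u, v, by simpa using hne₃, by linear_combination h₃⟩
  refine ⟨x * p * w, y * p * w, q * z * w, u * r * z, v * r * z, ?_, by
    linear_combination p ^ 2 * w ^ 2 * h₁ + z ^ 2 * w ^ 2 * h₂ + r ^ 2 * z ^ 2 * h₃⟩
  by_contra! H
  obtain ⟨hx, hy, hq, hu, hv⟩ := H
  simp only [mul_eq_zero, hz, hw, or_false] at hx hy hq hu hv
  have hp : p = 0 := by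
    by_contra hp
    simp [hx.resolve_right hp, hy.resolve_right hp, ht, hz] at h₁
  have hr : r = 0 := by
    by_contra hr
    simp [hu.resolve_right hr, hv.resolve_right hr, hs, hw] at h₃
  simp [hq, hp, hr] at hne₂

theorem DiagonalIsotropic.of_comp {ι κ : Type*} [Fintype ι] [Fintype κ] {a : κ → K} {f : ι → κ}
    (hf : f.Injective) (h : DiagonalIsotropic (a ∘ f)) : DiagonalIsotropic a := by
  obtain ⟨x, hx, h⟩ := h
  refine ⟨Function.extend f x 0, fun h0 => hx ?_, ?_⟩
  · funext i
    simpa [hf.extend_apply] using congrFun h0 (f i)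
  · rw [← h]
    refine (Fintype.sum_of_injective f hf _ _ (fun k hk => ?_) fun i => ?_).symm
    · rw [Function.extend_apply' _ _ _ (by simpa using hk)]
      simp
    · simp [hf.extend_apply]

theorem DiagonalIsotropic.of_mul_sq {ι : Type*} [Fintype ι] {a b q : ι → K} (hq : ∀ i, q i ≠ 0)
    (hab : ∀ i, a i = b i * q i ^ 2) (h : DiagonalIsotropic b) : DiagonalIsotropic a := by
  obtain ⟨x, hx, h⟩ := h
  refine ⟨fun i => x i / q i, fun h0 => hx ?_, ?_⟩
  · funext i
    simpa [hq i] using congrFun h0 i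
  · rw [← h]
    refine Finset.sum_congr rfl fun i _ => ?_
    have := hq i
    rw [hab]
    field_simp

theorem DiagonalIsotropic.of_ternaryIsotropic {ι : Type*} [Fintype ι] {a : ι → K} {i j k : ι}
    (hij : i ≠ j) (hik : i ≠ k) (hjk : j ≠ k) (h : TernaryIsotropic (a i) (a j) (a k)) :
    DiagonalIsotropic a := by
  obtain ⟨x, y, z, hne, h⟩ := h
  have hf : Function.Injective ![i, j, k] := by
    simp [Function.Injective, Fin.forall_fin_succ, hij, hik, hjk, hij.symm, hik.symm, hjk.symm]
  refine .of_comp hf ⟨![x, y, z], fun h0 => ?_, by simpa [Fin.sum_univ_three] using h⟩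
  have := congrFun h0
  simp [Fin.forall_fin_succ] at this
  tauto

end Field

section Padic

variable {p : ℕ} [Fact p.Prime]

theorem PadicInt.toZMod_eq_zero_iff_norm_lt_one (x : ℤ_[p]) : toZMod x = 0 ↔ ‖x‖ < 1 := by
  rw [← RingHom.mem_ker, ker_toZMod, IsLocalRing.mem_maximalIdeal, mem_nonunits]

/-- A `p`-adic unit which is a square modulo the odd prime `p` is a square. -/
theorem PadicInt.isSquare_of_toZMod (hp : p ≠ 2) {u : ℤ_[p]} (hu : toZMod u ≠ 0)
    (h : IsSquare (toZMod u)) : IsSquare u := by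
  obtain ⟨r, hr⟩ := h
  obtain ⟨a, rfl⟩ := ZMod.ringHom_surjective (toZMod (p := p)) r
  have h2 : ((2 : ℕ) : ZMod p) ≠ 0 := by
    rw [Ne, ZMod.natCast_eq_zero_iff, Nat.prime_dvd_prime_iff_eq Fact.out Nat.prime_two]
    exact hp
  have ha : toZMod a ≠ 0 := by
    intro ha
    simp [hr, ha] at hu
  have hnorm : ‖2 * a‖ = 1 := by
    refine le_antisymm (norm_le_one _) (not_lt.1 fun hlt => ?_)
    rw [← toZMod_eq_zero_iff_norm_lt_one, map_mul, map_ofNat] at hlt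
    exact mul_ne_zero (by exact_mod_cast h2) ha hlt
  have hF : ‖a ^ 2 - u‖ < 1 := by
    rw [← toZMod_eq_zero_iff_norm_lt_one]
    simp [hr, sq]
  obtain ⟨z, hz, -⟩ := hensels_lemma (p := p) (R := ℤ_[p]) (F := Polynomial.X ^ 2 - Polynomial.C u)
    (a := a) (by simpa [hnorm, Polynomial.derivative_X_pow, one_add_one_eq_two] using hF)
  refine ⟨z, ?_⟩
  simp at hz
  linear_combination -hz

theorem Padic.isSquare_intCast (hp : p ≠ 2) {n : ℤ} (hn : ¬ (p : ℤ) ∣ n)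
    (h : IsSquare (n : ZMod p)) : IsSquare (n : ℚ_[p]) := by
  have := PadicInt.isSquare_of_toZMod (p := p) hp (u := n)
    (by rwa [map_intCast, Ne, ZMod.intCast_zmod_eq_zero_iff_dvd]) (by rwa [map_intCast])
  simpa using this.map (PadicInt.Coe.ringHom (p := p))

theorem intCast_padic_ne_zero_of_not_dvd {n : ℤ} (hn : ¬ (p : ℤ) ∣ n) : (n : ℚ_[p]) ≠ 0 := by
  rw [Int.cast_ne_zero]
  rintro rfl
  exact hn (dvd_zero _)

/-- A ternary form with unit coefficients is isotropic over `ℚ_[p]` for odd `p`. -/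
theorem ternaryIsotropic_padic_of_not_dvd (hp : p ≠ 2) {a b c : ℤ} (ha : ¬ (p : ℤ) ∣ a)
    (hb : ¬ (p : ℤ) ∣ b) (hc : ¬ (p : ℤ) ∣ c) : TernaryIsotropic (a : ℚ_[p]) b c := by
  have hcoe : ∀ n : ℤ, ¬ (p : ℤ) ∣ n → (n : ZMod p) ≠ 0 := fun n hn => by
    rwa [Ne, ZMod.intCast_zmod_eq_zero_iff_dvd]
  have key : ∀ (u v : ℤ), ¬ (p : ℤ) ∣ u → ∀ x y : ZMod p, x ≠ 0 → u * x ^ 2 + v * y ^ 2 + c = 0 →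
      TernaryIsotropic (v : ℚ_[p]) c u := by
    intro u v hu x y hx h
    obtain ⟨Y, rfl⟩ := ZMod.intCast_surjective y
    have hmod : ((-(v * Y ^ 2 + c) * u : ℤ) : ZMod p) = (u * x) * (u * x) := by
      push_cast
      linear_combination (-u : ZMod p) * h
    have hndvd : ¬ (p : ℤ) ∣ -(v * Y ^ 2 + c) * u := by
      rw [← ZMod.intCast_zmod_eq_zero_iff_dvd, hmod]
      simp [hx, hcoe u hu]
    have hsq := Padic.isSquare_intCast hp hndvd ⟨_, hmod⟩
    have hne := intCast_padic_ne_zero_of_not_dvd hndvd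
    push_cast at hsq hne
    exact TernaryIsotropic.congr_right (right_ne_zero_of_mul hne) (left_ne_zero_of_mul hne) hsq
      ⟨Y, 1, 1, by simp, by ring⟩
  obtain ⟨x, y, h⟩ : ∃ x y : ZMod p, a * x ^ 2 + b * y ^ 2 + c = 0 := by
    have hodd : Fintype.card (ZMod p) % 2 = 1 := by
      rw [ZMod.card]
      exact (Nat.Prime.eq_two_or_odd Fact.out).resolve_left hp
    obtain ⟨x, y, h⟩ := FiniteField.exists_root_sum_quadratic
      (f := Polynomial.C (a : ZMod p) * Polynomial.X ^ 2)
      (g := Polynomial.C (b : ZMod p) * Polynomial.X ^ 2 + Polynomial.C (c : ZMod p))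
      (Polynomial.degree_C_mul_X_pow 2 (hcoe a ha))
      (by
        rw [Polynomial.degree_add_C]
        · exact Polynomial.degree_C_mul_X_pow 2 (hcoe b hb)
        · rw [Polynomial.degree_C_mul_X_pow 2 (hcoe b hb)]; decide) hodd
    exact ⟨x, y, by simp at h; linear_combination h⟩
  by_cases hx : x = 0
  · have hy : y ≠ 0 := by
      rintro rfl
      simp [hx, hcoe c hc] at h
    exact (key b a hb y x hy (by linear_combination h)).swap
  · exact (key a b ha x y hx h).rotate.rotate

/-- Square classes of `ℚ_[p]` are represented by a power of `p` times a residue class. -/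
theorem Padic.exists_squareClass (hp : p ≠ 2) {t : ℚ_[p]} (ht : t ≠ 0) :
    ∃ (i : ℕ) (r : ℤ), ¬ (p : ℤ) ∣ r ∧
      ∀ w : ℤ, (w : ZMod p) = r → IsSquare (((p ^ i * w : ℤ) : ℚ_[p]) * t) := by
  have hp0 : (p : ℚ_[p]) ≠ 0 := by
    exact_mod_cast (Fact.out : p.Prime).ne_zero
  have hunit : ‖t * (p : ℚ_[p]) ^ (-t.valuation)‖ = 1 := by
    rw [norm_mul, Padic.norm_eq_zpow_neg_valuation ht, norm_zpow, Padic.norm_p, inv_zpow,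
      zpow_neg, inv_inv, inv_mul_cancel₀]
    exact zpow_ne_zero _ (by exact_mod_cast (Fact.out : p.Prime).ne_zero)
  obtain ⟨u, hu⟩ : ∃ u : ℤ_[p], (u : ℚ_[p]) = t * (p : ℚ_[p]) ^ (-t.valuation) :=
    ⟨⟨_, hunit.le⟩, rfl⟩
  have hu0 : PadicInt.toZMod u ≠ 0 := by
    rw [Ne, PadicInt.toZMod_eq_zero_iff_norm_lt_one, PadicInt.norm_def, hu, hunit]
    exact lt_irrefl 1
  obtain ⟨r, hr⟩ := ZMod.intCast_surjective (PadicInt.toZMod u)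
  refine ⟨t.valuation.natAbs, r, ?_, fun w hw => ?_⟩
  · rwa [← ZMod.intCast_zmod_eq_zero_iff_dvd, hr]
  · have hmap : PadicInt.toZMod ((w : ℤ_[p]) * u) = PadicInt.toZMod u * PadicInt.toZMod u := by
      rw [map_mul, map_intCast, hw, hr]
    have hsq : IsSquare ((w : ℤ_[p]) * u) := PadicInt.isSquare_of_toZMod hp
      (by rw [hmap]; exact mul_ne_zero hu0 hu0) ⟨_, hmap⟩
    have hsq' : IsSquare ((w : ℚ_[p]) * u) := by
      obtain ⟨z, hz⟩ := hsq
      exact ⟨z, by exact_mod_cast congrArg ((↑) : ℤ_[p] → ℚ_[p]) hz⟩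
    have hev : IsSquare ((p : ℚ_[p]) ^ ((t.valuation.natAbs : ℤ) + t.valuation)) := by
      obtain ⟨k, hk⟩ : Even ((t.valuation.natAbs : ℤ) + t.valuation) := by
        rw [Int.even_add, Int.even_coe_nat, Int.natAbs_even]
      exact ⟨(p : ℚ_[p]) ^ k, by rw [hk, zpow_add₀ hp0]⟩
    have hq := zpow_ne_zero t.valuation hp0
    have hprod : ((p ^ t.valuation.natAbs * w : ℤ) : ℚ_[p]) * t =
        (p : ℚ_[p]) ^ ((t.valuation.natAbs : ℤ) + t.valuation) * (w * u) := by
      rw [zpow_add₀ hp0, hu, zpow_natCast, zpow_neg]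
      push_cast
      field_simp
    rw [hprod]
    exact hev.mul hsq'

theorem diagonalIsotropic_padic_of_squarefree (hp : p ≠ 2) {a : Fin 5 → ℤ}
    (ha : ∀ i, Squarefree (a i)) : DiagonalIsotropic (fun i => (a i : ℚ_[p])) := by
  classical
  obtain ⟨q, hq⟩ := Fintype.exists_lt_card_fiber_of_mul_lt_card
    (fun i : Fin 5 => decide ((p : ℤ) ∣ a i)) (n := 2) (by decide)
  obtain ⟨i, hi, j, hj, k, hk, hij, hik, hjk⟩ := Finset.two_lt_card.1 hq
  simp only [Finset.mem_filter_univ] at hi hj hk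
  refine .of_ternaryIsotropic hij hik hjk ?_
  cases q
  · exact ternaryIsotropic_padic_of_not_dvd hp (by simpa using hi) (by simpa using hj)
      (by simpa using hk)
  · have key : ∀ l, (p : ℤ) ∣ a l → ∃ m : ℤ, a l = p * m ∧ ¬ (p : ℤ) ∣ m := by
      rintro l ⟨m, hm⟩
      refine ⟨m, hm, fun ⟨m', hm'⟩ => ?_⟩
      have := ha l p ⟨m', by rw [hm, hm', mul_assoc]⟩
      exact (Nat.prime_iff_prime_int.1 Fact.out).not_isUnit this
    obtain ⟨i', hi', hin⟩ := key i (by simpa using hi)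
    obtain ⟨j', hj', hjn⟩ := key j (by simpa using hj)
    obtain ⟨k', hk', hkn⟩ := key k (by simpa using hk)
    obtain ⟨x, y, z, hne, h⟩ := ternaryIsotropic_padic_of_not_dvd hp hin hjn hkn
    refine ⟨x, y, z, hne, ?_⟩
    rw [hi', hj', hk']
    push_cast
    linear_combination (p : ℚ_[p]) * h

/-- An isotropic form over `ℚ_[p]` has a primitive integral zero. -/
theorem TernaryIsotropic.exists_primitive {a b c : ℤ} (h : TernaryIsotropic (a : ℚ_[p]) b c) :
    ∃ x y z : ℤ_[p], a * x ^ 2 + b * y ^ 2 + c * z ^ 2 = 0 ∧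
      (PadicInt.toZMod x ≠ 0 ∨ PadicInt.toZMod y ≠ 0 ∨ PadicInt.toZMod z ≠ 0) := by
  obtain ⟨x, y, z, hne, h⟩ := h
  obtain ⟨m, hm, hx, hy, hz, hmem⟩ : ∃ m : ℚ_[p], m ≠ 0 ∧ ‖x‖ ≤ ‖m‖ ∧ ‖y‖ ≤ ‖m‖ ∧ ‖z‖ ≤ ‖m‖ ∧
      (x = m ∨ y = m ∨ z = m) := by
    have hpos : 0 < ‖x‖ ∨ 0 < ‖y‖ ∨ 0 < ‖z‖ := by simpa using hne
    rcases le_total ‖x‖ ‖y‖ with h1 | h1 <;> rcases le_total ‖y‖ ‖z‖ with h2 | h2 <;>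
      rcases le_total ‖x‖ ‖z‖ with h3 | h3
    all_goals first
      | exact ⟨x, norm_pos_iff.1 (by grind), le_rfl, by linarith, by linarith, by simp⟩
      | exact ⟨y, norm_pos_iff.1 (by grind), by linarith, le_rfl, by linarith, by simp⟩
      | exact ⟨z, norm_pos_iff.1 (by grind), by linarith, by linarith, le_rfl, by simp⟩
  have hlift : ∀ w : ℚ_[p], ‖w‖ ≤ ‖m‖ →
      ∃ W : ℤ_[p], w = W * m ∧ (w = m → PadicInt.toZMod W ≠ 0) := fun w hw => by
    have hle : ‖w / m‖ ≤ 1 := by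
      rw [norm_div]
      exact div_le_one_of_le₀ hw (norm_nonneg m)
    obtain ⟨W, hW⟩ : ∃ W : ℤ_[p], (W : ℚ_[p]) = w / m := ⟨⟨_, hle⟩, rfl⟩
    refine ⟨W, by rw [hW, div_mul_cancel₀ _ hm], fun hwm => ?_⟩
    rw [Ne, PadicInt.toZMod_eq_zero_iff_norm_lt_one, PadicInt.norm_def, hW, hwm, div_self hm]
    simp
  obtain ⟨X, rfl, hX⟩ := hlift x hx
  obtain ⟨Y, rfl, hY⟩ := hlift y hy
  obtain ⟨Z, rfl, hZ⟩ := hlift z hz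
  refine ⟨X, Y, Z, ?_, hmem.imp hX (Or.imp hY hZ)⟩
  apply PadicInt.ext
  push_cast
  apply mul_right_cancel₀ (pow_ne_zero 2 hm)
  linear_combination h

/-- The residue condition imposed by isotropy of `⟨1, a, b⟩` at a prime exactly dividing `b`. -/
theorem TernaryIsotropic.isSquare_neg_zmod {a b : ℤ} (hb : ¬ (p : ℤ) ∣ b)
    (h : TernaryIsotropic (1 : ℚ_[p]) a ((p * b : ℤ) : ℚ_[p])) : IsSquare ((-a : ℤ) : ZMod p) := by
  obtain ⟨x, y, z, h, hne⟩ := TernaryIsotropic.exists_primitive (p := p) (a := 1) (b := a)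
    (c := p * b) (by simpa using h)
  have hmod := congrArg (PadicInt.toZMod (p := p)) h
  simp at hmod
  by_cases hy : PadicInt.toZMod y = 0
  · have hx : PadicInt.toZMod x = 0 := by simpa [hy] using hmod
    have hp0 : (p : ℤ_[p]) ≠ 0 := by exact_mod_cast (Fact.out : p.Prime).ne_zero
    rw [PadicInt.toZMod_eq_zero_iff_norm_lt_one, PadicInt.norm_lt_one_iff_dvd] at hx hy
    obtain ⟨x', rfl⟩ := hx
    obtain ⟨y', rfl⟩ := hy
    have h' : (b : ℤ_[p]) * z ^ 2 = p * (-(x' ^ 2 + a * y' ^ 2)) := by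
      apply mul_left_cancel₀ hp0
      push_cast at h
      linear_combination h
    have hz := congrArg (PadicInt.toZMod (p := p)) h'
    simp [ZMod.intCast_zmod_eq_zero_iff_dvd, hb] at hz
    simp [hz] at hne
  · exact ⟨PadicInt.toZMod x / PadicInt.toZMod y, by
      field_simp
      push_cast
      linear_combination -hmod⟩

end Padic

section Legendre

theorem isSquare_intCast_zmod_of_squarefree {a : ℤ} {n : ℕ} (hn : Squarefree n)
    (h : ∀ p, p.Prime → p ∣ n → IsSquare (a : ZMod p)) : IsSquare (a : ZMod n) := by
  induction n using induction_on_primes with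
  | zero => exact absurd hn not_squarefree_zero
  | one => exact ⟨0, Subsingleton.elim _ _⟩
  | prime_mul p n hp ih =>
    have hcop : p.Coprime n := Nat.coprime_of_squarefree_mul hn
    obtain ⟨r, hr⟩ := h p hp (dvd_mul_right p n)
    obtain ⟨s, hs⟩ := ih (hn.squarefree_of_dvd (dvd_mul_left n p))
      fun q hq hqn => h q hq (hqn.mul_left p)
    refine ⟨(ZMod.chineseRemainder hcop).symm (r, s), ?_⟩
    rw [← map_mul, RingEquiv.eq_symm_apply, map_intCast, Prod.mk_mul_mk, ← hr, ← hs]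
    rfl

/-- Isotropy of an integral ternary form over `ℝ` and over `ℚ_[p]` for all odd `p`. -/
def LocallyIsotropic (a b c : ℤ) : Prop :=
  (∀ (p : ℕ) [Fact p.Prime], p ≠ 2 → TernaryIsotropic (a : ℚ_[p]) b c) ∧
    TernaryIsotropic (a : ℝ) b c

theorem LocallyIsotropic.map {a b c a' b' c' : ℤ} (h : LocallyIsotropic a b c)
    (H : ∀ (K : Type) [Field K] [CharZero K],
      TernaryIsotropic (a : K) b c → TernaryIsotropic (a' : K) b' c') :
    LocallyIsotropic a' b' c' :=
  ⟨fun p _ hp => H _ (h.1 p hp), H _ h.2⟩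

/-- The residue condition for all primes dividing a squarefree coefficient. -/
theorem LocallyIsotropic.isSquare_neg {a b : ℤ} (hb : Squarefree b) (h : LocallyIsotropic 1 a b) :
    IsSquare ((-a : ℤ) : ZMod b.natAbs) := by
  refine isSquare_intCast_zmod_of_squarefree (Int.squarefree_natAbs.2 hb) fun p hp hpb => ?_
  have := Fact.mk hp
  by_cases hp2 : p = 2
  · subst hp2
    generalize ((-a : ℤ) : ZMod 2) = r
    decide +revert
  obtain ⟨m, rfl⟩ := Int.natCast_dvd.2 hpb
  refine TernaryIsotropic.isSquare_neg_zmod (b := m) (fun ⟨k, hk⟩ => ?_) (by simpa using h.1 p hp2)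
  exact (Nat.prime_iff_prime_int.1 hp).not_isUnit (hb p ⟨k, by rw [hk, mul_assoc]⟩)

theorem ternaryIsotropic_one_of_locallyIsotropic {a b : ℤ} (ha : a ≠ 0) (hb : b ≠ 0)
    (h : LocallyIsotropic 1 a b) : TernaryIsotropic (1 : ℚ) a b := by
  induction hN : a.natAbs + b.natAbs using Nat.strong_induction_on generalizing a b with
  | _ N ih =>
  wlog hab : a.natAbs ≤ b.natAbs generalizing a b
  · exact (this hb ha (h.map fun K _ _ hK => hK.swap) (by omega) (by omega)).swap
  by_cases hsf : Squarefree b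
  · by_cases hb1 : b.natAbs = 1
    · have ha1 : a.natAbs = 1 := by omega
      rcases Int.natAbs_eq_iff.1 ha1 with rfl | rfl
      · rcases Int.natAbs_eq_iff.1 hb1 with rfl | rfl
        · obtain ⟨x, y, z, hne, h⟩ := h.2
          have : 0 < x ^ 2 + y ^ 2 + z ^ 2 := by
            rcases hne with h | h | h <;> positivity
          push_cast at h
          linarith
        · exact ⟨1, 0, 1, by simp, by norm_num⟩
      · exact ⟨1, 1, 0, by simp, by norm_num⟩
    obtain ⟨r, hr⟩ := h.isSquare_neg hsf
    have : NeZero b.natAbs := ⟨by simpa using hb⟩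
    have htle := ZMod.natAbs_valMinAbs_le r
    obtain ⟨b', hb'⟩ : b ∣ r.valMinAbs ^ 2 + a := by
      rw [← Int.natAbs_dvd, ← ZMod.intCast_zmod_eq_zero_iff_dvd]
      push_cast at hr ⊢
      linear_combination -hr
    set t := r.valMinAbs
    by_cases hb0 : b' = 0
    · refine ⟨t, 1, 0, by simp, ?_⟩
      rw [hb0, mul_zero] at hb'
      have : (t : ℚ) ^ 2 + a = 0 := by exact_mod_cast hb'
      linear_combination this
    have hlt : b'.natAbs < b.natAbs := by
      have hle : b.natAbs * b'.natAbs ≤ t.natAbs ^ 2 + a.natAbs := by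
        rw [← Int.natAbs_mul, ← hb', ← Int.natAbs_pow]
        exact Int.natAbs_add_le _ _
      have ht2 : 2 * t.natAbs ≤ b.natAbs := by omega
      have hb2 : 2 ≤ b.natAbs := by omega
      by_contra! hlt
      nlinarith [Nat.mul_le_mul ht2 ht2, Nat.mul_le_mul_left b.natAbs hlt,
        Nat.mul_le_mul_right b.natAbs hb2]
    have hiso := ih (a.natAbs + b'.natAbs) (by omega) ha hb0 (h.map fun K _ _ hK => by
      have : (t : K) ^ 2 + a = b * b' := by exact_mod_cast hb'
      simpa using TernaryIsotropic.of_mul_eq_norm (by exact_mod_cast hb) this (by simpa using hK))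
      rfl
    exact hiso.of_mul_eq_norm (t := t) (by exact_mod_cast hb0)
      (by rw [mul_comm]; exact_mod_cast hb')
  · obtain ⟨x, ⟨s, rfl⟩, hx⟩ : ∃ x : ℤ, x * x ∣ b ∧ ¬ IsUnit x := by
      simpa [Squarefree] using hsf
    have hs : s ≠ 0 := right_ne_zero_of_mul hb
    have hx0 : x ≠ 0 := left_ne_zero_of_mul (left_ne_zero_of_mul hb)
    have hlt : s.natAbs < (x * x * s).natAbs := by
      have hx2 : 2 ≤ x.natAbs := by
        rw [Int.isUnit_iff_natAbs_eq] at hx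
        omega
      have : 0 < s.natAbs := by omega
      rw [Int.natAbs_mul, Int.natAbs_mul]
      nlinarith [Nat.mul_le_mul hx2 hx2]
    have hiso := ih (a.natAbs + s.natAbs) (by omega) ha hs (h.map fun K _ _ hK =>
      hK.congr_right (by exact_mod_cast hs) (by exact_mod_cast hb)
        ⟨x * s, by push_cast; ring⟩) rfl
    exact hiso.congr_right (by exact_mod_cast hb) (by exact_mod_cast hs)
      ⟨x * s, by push_cast; ring⟩

/-- Legendre's theorem, with the condition at `2` omitted. -/
theorem ternaryIsotropic_of_locallyIsotropic {a b c : ℤ} (ha : a ≠ 0) (hb : b ≠ 0) (hc : c ≠ 0)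
    (h : LocallyIsotropic a b c) : TernaryIsotropic (a : ℚ) b c := by
  rw [← ternaryIsotropic_one_iff (by exact_mod_cast ha)]
  have := ternaryIsotropic_one_of_locallyIsotropic (mul_ne_zero ha hb) (mul_ne_zero ha hc)
    (h.map fun K _ _ hK => by
      simpa using (ternaryIsotropic_one_iff (by exact_mod_cast ha)).2 hK)
  simpa using this

end Legendre

section Reciprocity

open NumberTheorySymbols ZMod

/-- Quadratic reciprocity for the Jacobi symbol with a signed odd numerator. -/
theorem jacobiSym_eq_jacobiSym_natAbs {k : ℤ} {m : ℕ} (hk : k % 2 = 1) (hm : m % 2 = 1) :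
    J(k | m) = (if k % 4 = 1 then 1 else χ₄ m) * J(m | k.natAbs) := by
  have hkn : k.natAbs % 2 = 1 := by omega
  have hχ : χ₄ (m : ZMod 4) = if m % 4 = 1 then 1 else -1 := by
    rw [χ₄_nat_eq_if_mod_four]
    simp [hm]
  have hrec := jacobiSym.quadratic_reciprocity_if hkn hm
  rcases le_total 0 k with h0 | h0
  · have hcast : J(k | m) = J((k.natAbs : ℤ) | m) := by rw [Int.natAbs_of_nonneg h0]
    rw [hcast, ← hrec, hχ]
    split_ifs <;> omega
  · have hcast : J(k | m) = χ₄ m * J((k.natAbs : ℤ) | m) := by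
      rw [← jacobiSym.neg _ (Nat.odd_iff.2 hm), Int.ofNat_natAbs_of_nonpos h0, neg_neg]
    rw [hcast, ← hrec, hχ]
    split_ifs <;> omega

theorem jacobiSym_congr_of_prime_dvd {m m' : ℤ} {n : ℕ}
    (h : ∀ p, p.Prime → p ∣ n → (m : ZMod p) = m') : J(m | n) = J(m' | n) := by
  unfold jacobiSym
  congr 1
  refine List.pmap_congr_left _ fun p hp _ _ => ?_
  simp only [legendreSym]
  rw [h p (Nat.prime_of_mem_primeFactorsList hp) (Nat.dvd_of_mem_primeFactorsList hp)]

/-- Dirichlet's theorem with prescribed residues modulo `8` and finitely many odd primes. -/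
theorem exists_prime_of_residues {P : Finset ℕ} (hP : ∀ p ∈ P, p.Prime ∧ p ≠ 2) {R : ℕ → ℤ}
    (hR : ∀ p ∈ P, ¬ (p : ℤ) ∣ R p) {r : ℕ} (hr : r % 2 = 1) :
    ∃ m : ℕ, m.Prime ∧ m % 8 = r % 8 ∧ ∀ p ∈ P, (m : ZMod p) = R p := by
  classical
  have hcop8 : ∀ p ∈ P, Nat.Coprime p 8 := fun p hp =>
    Nat.Coprime.pow_right 3 ((Nat.coprime_primes (hP p hp).1 Nat.prime_two).2 (hP p hp).2)
  have hP8 : 8 ∉ P := fun h => by simpa using hcop8 8 h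
  let x : ℕ → ℕ := fun q => if q = 8 then r else (R q % q).toNat
  obtain ⟨k, hk⟩ := Nat.chineseRemainderOfFinset x id (insert 8 P)
    (by
      intro q hq
      rcases Finset.mem_insert.1 hq with rfl | hq
      · simp
      · exact (hP q hq).1.ne_zero)
    (by
      intro q hq q' hq' hne
      rcases Finset.mem_insert.1 hq with rfl | hq <;> rcases Finset.mem_insert.1 hq' with rfl | hq'
      · exact absurd rfl hne
      · exact (hcop8 _ hq').symm
      · exact hcop8 _ hq
      · exact (Nat.coprime_primes (hP q hq).1 (hP q' hq').1).2 hne)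
  have hk8 : k % 8 = r % 8 := by simpa [x, Nat.ModEq] using hk 8 (by simp)
  have hkP : ∀ p ∈ P, (k : ZMod p) = R p := fun p hp => by
    have h := hk p (by simp [hp])
    have hp8 : p ≠ 8 := fun h => hP8 (h ▸ hp)
    simp only [x, hp8, if_false, id] at h
    rw [← ZMod.natCast_eq_natCast_iff] at h
    have hpos : (p : ℤ) ≠ 0 := by exact_mod_cast (hP p hp).1.ne_zero
    have hcast : (((R p % p).toNat : ℤ) : ZMod p) = R p := by
      rw [Int.toNat_of_nonneg (Int.emod_nonneg _ hpos), ZMod.intCast_mod]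
    rw [h, ← hcast, Int.cast_natCast]
  have hcop : k.Coprime (∏ q ∈ insert 8 P, q) := by
    refine Nat.Coprime.prod_right fun q hq => ?_
    rcases Finset.mem_insert.1 hq with rfl | hq
    · exact Nat.Coprime.pow_right 3 (Nat.coprime_two_right.2 (Nat.odd_iff.2 (by omega)))
    · rw [Nat.coprime_comm, (hP q hq).1.coprime_iff_not_dvd, ← ZMod.natCast_eq_zero_iff, hkP q hq,
        ZMod.intCast_zmod_eq_zero_iff_dvd]
      exact hR q hq
  have hne : ∏ q ∈ insert 8 P, q ≠ 0 := by
    refine Finset.prod_ne_zero_iff.2 fun q hq => ?_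
    rcases Finset.mem_insert.1 hq with rfl | hq
    · simp
    · exact (hP q hq).1.ne_zero
  obtain ⟨m, -, hm, hmk⟩ := Nat.forall_exists_prime_gt_and_modEq 0 hne hcop
  refine ⟨m, hm, ?_, fun p hp => ?_⟩
  · rw [← hk8]
    exact hmk.of_dvd (Finset.dvd_prod_of_mem (fun q => q) (Finset.mem_insert_self _ _))
  · rw [← hkP p hp, ZMod.natCast_eq_natCast_iff]
    exact hmk.of_dvd (Finset.dvd_prod_of_mem (fun q => q) (Finset.mem_insert_of_mem hp))

/-- The residue class modulo `8` of a prime can be adjusted to make two independent quadratic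
characters trivial. -/
theorem exists_prime_of_residues_of_jacobiSym {P : Finset ℕ} (hP : ∀ p ∈ P, p.Prime ∧ p ≠ 2)
    {R : ℕ → ℤ} (hR : ∀ p ∈ P, ¬ (p : ℤ) ∣ R p) {k₁ k₂ : ℤ} (hk₁ : k₁ % 4 = 3)
    (hk₂ : k₂ % 2 = 1) (hk₁P : ∀ p : ℕ, p.Prime → (p : ℤ) ∣ k₁ → p ∈ P)
    (hk₂P : ∀ p : ℕ, p.Prime → (p : ℤ) ∣ k₂ → p ∈ P) :
    ∃ m : ℕ, m.Prime ∧ m ≠ 2 ∧ (∀ p ∈ P, (m : ZMod p) = R p) ∧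
      J(k₁ | m) = 1 ∧ J(2 * k₂ | m) = 1 := by
  obtain ⟨m₀, hm₀, -, hm₀R⟩ := exists_prime_of_residues hP hR (r := 1) rfl
  have hunit : ∀ k : ℤ, k ≠ 0 → (∀ p : ℕ, p.Prime → (p : ℤ) ∣ k → p ∈ P) →
      J(m₀ | k.natAbs) = 1 ∨ J(m₀ | k.natAbs) = -1 := fun k hk hkP => by
    refine jacobiSym.eq_one_or_neg_one ?_
    rw [Int.gcd_natCast_natCast]
    refine Nat.Coprime.symm (Nat.coprime_of_dvd fun p hp hpk hpm => ?_)
    have hpP := hkP p hp (Int.natCast_dvd.2 hpk)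
    rw [← ZMod.natCast_eq_zero_iff, hm₀R p hpP, ZMod.intCast_zmod_eq_zero_iff_dvd] at hpm
    exact hR p hpP hpm
  obtain ⟨r, hr, hr₁, hr₂⟩ : ∃ r : ℕ, r % 2 = 1 ∧
      (if r % 4 = 1 then 1 else -1) * J(m₀ | k₁.natAbs) = 1 ∧
      (if r % 8 = 1 ∨ r % 8 = 7 then 1 else -1) *
        ((if k₂ % 4 = 1 then 1 else if r % 4 = 1 then 1 else -1) * J(m₀ | k₂.natAbs)) = 1 := by
    rcases hunit k₁ (by omega) hk₁P with h₁ | h₁ <;> rcases hunit k₂ (by omega) hk₂P with h₂ | h₂ <;>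
      by_cases h4 : k₂ % 4 = 1 <;> simp only [h₁, h₂, h4, if_true, if_false]
    all_goals first
      | exact ⟨1, rfl, rfl, rfl⟩
      | exact ⟨3, rfl, rfl, rfl⟩
      | exact ⟨5, rfl, rfl, rfl⟩
      | exact ⟨7, rfl, rfl, rfl⟩
  obtain ⟨m, hm, hm8, hmR⟩ := exists_prime_of_residues hP hR hr
  have hcongr : ∀ k : ℤ, (∀ p : ℕ, p.Prime → (p : ℤ) ∣ k → p ∈ P) →
      J(m | k.natAbs) = J(m₀ | k.natAbs) := fun k hkP =>
    jacobiSym_congr_of_prime_dvd fun p hp hpk => by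
      have hpP := hkP p hp (Int.natCast_dvd.2 hpk)
      simp [hm₀R p hpP, hmR p hpP]
  have hm2 : m % 2 = 1 := by omega
  have hm4 : m % 4 = r % 4 := by omega
  have hχ : χ₄ (m : ZMod 4) = if r % 4 = 1 then 1 else -1 := by
    rw [χ₄_nat_eq_if_mod_four, hm4]
    simp [hm2]
  refine ⟨m, hm, by omega, hmR, ?_, ?_⟩
  · rw [jacobiSym_eq_jacobiSym_natAbs (by omega) hm2, if_neg (by omega), hcongr k₁ hk₁P, hχ, hr₁]
  · rw [jacobiSym.mul_left, jacobiSym.at_two (Nat.odd_iff.2 hm2),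
      jacobiSym_eq_jacobiSym_natAbs hk₂ hm2, hcongr k₂ hk₂P, hχ, χ₈_nat_eq_if_mod_eight, hm8,
      if_neg (by omega), hr₂]

/-- Integers with prescribed square classes at finitely many odd primes, having one further prime
factor at which two independent quadratic characters are trivial. -/
theorem exists_prime_squareClass {P : Finset ℕ} (hP : ∀ p ∈ P, p.Prime ∧ p ≠ 2) (I : ℕ → ℕ)
    {R : ℕ → ℤ} (hR : ∀ p ∈ P, ¬ (p : ℤ) ∣ R p) {σ k₁ k₂ : ℤ} (hσ : ∀ p ∈ P, ¬ (p : ℤ) ∣ σ)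
    (hk₁ : k₁ % 4 = 3) (hk₂ : k₂ % 2 = 1) (hk₁P : ∀ p : ℕ, p.Prime → (p : ℤ) ∣ k₁ → p ∈ P)
    (hk₂P : ∀ p : ℕ, p.Prime → (p : ℤ) ∣ k₂ → p ∈ P) :
    ∃ (l : ℕ) (τ : ℤ), l.Prime ∧ l ≠ 2 ∧ 0 < τ ∧
      (∀ p : ℕ, p.Prime → (p : ℤ) ∣ τ → p ∈ P) ∧
      (∀ p ∈ P, ∃ w : ℤ, σ * τ * l = p ^ I p * w ∧ (w : ZMod p) = R p) ∧
      J(k₁ | l) = 1 ∧ J(2 * k₂ | l) = 1 := by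
  classical
  let cofactor : ℕ → ℤ := fun p => σ * ∏ q ∈ P.erase p, (q : ℤ) ^ I q
  have hdvd : ∀ (Q : Finset ℕ) (p : ℕ), Q ⊆ P → p.Prime → (p : ℤ) ∣ ∏ q ∈ Q, (q : ℤ) ^ I q →
      p ∈ Q := by
    intro Q p hQ hp h
    obtain ⟨q, hq, hpq⟩ := (Nat.prime_iff_prime_int.1 hp).exists_mem_finset_dvd h
    have := (Nat.prime_iff_prime_int.1 hp).dvd_of_dvd_pow hpq
    rw [Int.natCast_dvd_natCast, Nat.prime_dvd_prime_iff_eq hp (hP q (hQ hq)).1] at this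
    rwa [this]
  have hcof : ∀ p ∈ P, (cofactor p : ZMod p) ≠ 0 := by
    intro p hp h
    rw [ZMod.intCast_zmod_eq_zero_iff_dvd] at h
    rcases (Nat.prime_iff_prime_int.1 (hP p hp).1).dvd_or_dvd h with h | h
    · exact hσ p hp h
    · simpa using hdvd _ p (Finset.erase_subset _ _) (hP p hp).1 h
  have hinv : ∀ p, ∃ r : ℤ, p ∈ P → ¬ (p : ℤ) ∣ r ∧ (cofactor p : ZMod p) * r = R p := by
    intro p
    by_cases hp : p ∈ P
    · have := Fact.mk (hP p hp).1
      obtain ⟨r, hr⟩ := ZMod.intCast_surjective ((R p : ZMod p) / (cofactor p : ZMod p))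
      have hmul : (cofactor p : ZMod p) * r = R p := by rw [hr, mul_div_cancel₀ _ (hcof p hp)]
      refine ⟨r, fun _ => ⟨fun hdiv => hR p hp ?_, hmul⟩⟩
      rw [← ZMod.intCast_zmod_eq_zero_iff_dvd] at hdiv ⊢
      rw [← hmul, hdiv, mul_zero]
    · exact ⟨0, fun h => absurd h hp⟩
  choose R' hR' using hinv
  obtain ⟨l, hl, hl2, hlR, hJ₁, hJ₂⟩ := exists_prime_of_residues_of_jacobiSym hP
    (R := R') (fun p hp => (hR' p hp).1) hk₁ hk₂ hk₁P hk₂P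
  refine ⟨l, ∏ q ∈ P, (q : ℤ) ^ I q, hl, hl2, ?_, fun p hp h => hdvd P p subset_rfl hp h,
    fun p hp => ⟨cofactor p * l, ?_, ?_⟩, hJ₁, hJ₂⟩
  · refine Finset.prod_pos fun q hq => pow_pos ?_ _
    exact_mod_cast (hP q hq).1.pos
  · rw [← Finset.mul_prod_erase P _ hp]
    ring
  · push_cast
    rw [hlR p hp]
    exact (hR' p hp).2

theorem Padic.isSquare_of_jacobiSym_eq_one {p : ℕ} [Fact p.Prime] (hp : p ≠ 2) {n : ℤ}
    (h : J(n | p) = 1) : IsSquare (n : ℚ_[p]) := by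
  refine Padic.isSquare_intCast hp (fun hdvd => ?_) (ZMod.isSquare_of_jacobiSym_eq_one h)
  rw [← jacobiSym.legendreSym.to_jacobiSym, (legendreSym.eq_zero_iff p n).2
    ((ZMod.intCast_zmod_eq_zero_iff_dvd n p).2 hdvd)] at h
  exact zero_ne_one h

end Reciprocity

section RankFive

open NumberTheorySymbols

theorem isSquare_real_of_pos {x : ℝ} (hx : 0 < x) : IsSquare x :=
  ⟨√x, (Real.mul_self_sqrt hx.le).symm⟩

/-- At an odd prime, the square classes of the two auxiliary values can be chosen successively. -/
theorem exists_localClasses {p : ℕ} [Fact p.Prime] (hp : p ≠ 2) {a b c d e : ℤ}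
    (ha : Squarefree a) (hb : Squarefree b) (hc : Squarefree c) (hd : Squarefree d)
    (he : Squarefree e) :
    ∃ (i : ℕ) (r : ℤ), ¬ (p : ℤ) ∣ r ∧ ∀ w : ℤ, (w : ZMod p) = r →
      TernaryIsotropic (a : ℚ_[p]) b ((-(p ^ i * w) : ℤ) : ℚ_[p]) ∧
      ∃ (i' : ℕ) (r' : ℤ), ¬ (p : ℤ) ∣ r' ∧ ∀ w' : ℤ, (w' : ZMod p) = r' →
        TernaryIsotropic (c : ℚ_[p]) ((p ^ i' * w' : ℤ) : ℚ_[p]) ((p ^ i * w : ℤ) : ℚ_[p]) ∧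
        TernaryIsotropic (d : ℚ_[p]) e ((-(p ^ i' * w') : ℤ) : ℚ_[p]) := by
  have hiso : DiagonalIsotropic ![(a : ℚ_[p]), b, c, d, e] := by
    have := diagonalIsotropic_padic_of_squarefree hp (a := ![a, b, c, d, e])
      (by simp [Fin.forall_fin_succ, ha, hb, hc, hd, he])
    convert this using 2 with i
    fin_cases i <;> rfl
  obtain ⟨t, s, ht, hs, h₁, h₂, h₃⟩ := exists_ternaryIsotropic_of_diagonalIsotropic
    (by exact_mod_cast ha.ne_zero) (by exact_mod_cast hc.ne_zero) (by exact_mod_cast hd.ne_zero)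
    hiso
  obtain ⟨i, r, hr, hi⟩ := Padic.exists_squareClass hp ht
  obtain ⟨i', r', hr', hi'⟩ := Padic.exists_squareClass hp hs
  have hne : ∀ (j : ℕ) (r w : ℤ), ¬ (p : ℤ) ∣ r → (w : ZMod p) = r →
      ((p ^ j * w : ℤ) : ℚ_[p]) ≠ 0 := by
    rintro j r w hr hw h0
    rw [Int.cast_eq_zero, mul_eq_zero] at h0
    have hw0 := h0.resolve_left (pow_ne_zero _ (by exact_mod_cast (Fact.out : p.Prime).ne_zero))
    rw [hw0, Int.cast_zero] at hw
    exact hr ((ZMod.intCast_zmod_eq_zero_iff_dvd r p).1 hw.symm)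
  refine ⟨i, r, hr, fun w hw => ⟨?_, i', r', hr', fun w' hw' => ⟨?_, ?_⟩⟩⟩
  · rw [Int.cast_neg]
    refine h₁.congr_right (neg_ne_zero.2 (hne i r w hr hw)) (neg_ne_zero.2 ht) ?_
    rw [neg_mul_neg, mul_comm]
    exact hi w hw
  · have hs' := h₂.swap.congr_right (hne i' r' w' hr' hw') hs (by rw [mul_comm]; exact hi' w' hw')
    exact hs'.swap.congr_right (hne i r w hr hw) ht (by rw [mul_comm]; exact hi w hw)
  · rw [Int.cast_neg]
    refine h₃.congr_right (neg_ne_zero.2 (hne i' r' w' hr' hw')) (neg_ne_zero.2 hs) ?_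
    rw [neg_mul_neg, mul_comm]
    exact (hi' w' hw' :)

/-- The rank five case, for coefficients in a suitable order. -/
theorem diagonalIsotropic_rat_of_real {a b c d e : ℤ} (ha : Squarefree a) (hb : Squarefree b)
    (hc : Squarefree c) (hd : Squarefree d) (he : Squarefree e)
    (hab : ∃ k u : ℤ, -(a * b) = u ^ 2 * k ∧ (k % 4 = 3 ∨ ∃ k', k = 2 * k' ∧ k' % 2 = 1))
    (hde : ∃ k u : ℤ, -(d * e) = u ^ 2 * k ∧ k % 4 = 3)
    (hreal : DiagonalIsotropic ![(a : ℝ), b, c, d, e]) :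
    DiagonalIsotropic ![(a : ℚ), b, c, d, e] := by
  classical
  have ha0 := ha.ne_zero
  have hb0 := hb.ne_zero
  have hc0 := hc.ne_zero
  have hd0 := hd.ne_zero
  have he0 := he.ne_zero
  obtain ⟨tR, sR, htR, hsR, hR₁, hR₂, hR₃⟩ := exists_ternaryIsotropic_of_diagonalIsotropic
    (by exact_mod_cast ha0) (by exact_mod_cast hc0) (by exact_mod_cast hd0) hreal
  obtain ⟨k, u, hku, hk⟩ := hab
  obtain ⟨k₃, u₃, hku₃, hk₃⟩ := hde
  have hsign : ∀ x : ℝ, x ≠ 0 → ∃ ε : ℤ, (ε = 1 ∨ ε = -1) ∧ 0 < ε * x := fun x hx => by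
    rcases lt_or_gt_of_ne hx with h | h
    · exact ⟨-1, by simp, by push_cast; linarith⟩
    · exact ⟨1, by simp, by push_cast; linarith⟩
  obtain ⟨ε, hε, hεt⟩ := hsign tR htR
  obtain ⟨ε', hε', hεs⟩ := hsign sR hsR
  obtain ⟨σ, c', hcσ, hc', hσ2, hσt⟩ : ∃ σ c' : ℤ, c * σ = 2 * c' ∧ c' % 2 = 1 ∧ σ ∣ 2 ∧
      0 < σ * tR := by
    rcases Int.emod_two_eq_zero_or_one c with h | h
    · obtain ⟨c', rfl⟩ := Int.dvd_of_emod_eq_zero h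
      refine ⟨ε, c' * ε, by ring, ?_, by rcases hε with rfl | rfl <;> decide, hεt⟩
      have : c' % 2 ≠ 0 := fun h2 => by
        obtain ⟨c'', rfl⟩ := Int.dvd_of_emod_eq_zero h2
        have := hc 2 ⟨c'', by ring⟩
        rw [Int.isUnit_iff] at this
        omega
      rcases hε with rfl | rfl <;> omega
    · refine ⟨2 * ε, c * ε, by ring, ?_, by rcases hε with rfl | rfl <;> decide, ?_⟩
      · rcases hε with rfl | rfl <;> omega
      · push_cast
        linarith
  set P : Finset ℕ := (a * b * c * d * e).natAbs.primeFactors.erase 2 with hPdef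
  have hP : ∀ p ∈ P, p.Prime ∧ p ≠ 2 := fun p hp => by
    rw [Finset.mem_erase, Nat.mem_primeFactors] at hp
    exact ⟨hp.2.1, hp.1⟩
  have hdvdP : ∀ p : ℕ, p.Prime → p ≠ 2 → (p : ℤ) ∣ a * b * c * d * e → p ∈ P := by
    intro p hp hp2 hdvd
    rw [Finset.mem_erase, Nat.mem_primeFactors]
    exact ⟨hp2, hp, Int.natCast_dvd.1 hdvd, by simp [ha0, hb0, hc0, hd0, he0]⟩
  have hoddP : ∀ n : ℤ, n % 2 = 1 → n ∣ a * b * c * d * e → ∀ p : ℕ, p.Prime → (p : ℤ) ∣ n →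
      p ∈ P := by
    intro n hn hdvd p hp hpn
    refine hdvdP p hp ?_ (hpn.trans hdvd)
    rintro rfl
    push_cast at hpn
    omega
  have hab_dvd : a * b ∣ a * b * c * d * e := ⟨c * d * e, by ring⟩
  have hde_dvd : d * e ∣ a * b * c * d * e := ⟨a * b * c, by ring⟩
  -- the first auxiliary value `t`
  have hloc : ∀ p : ℕ, ∃ (i : ℕ) (r : ℤ), p ∈ P → ¬ (p : ℤ) ∣ r ∧
      ∀ [Fact p.Prime] (w : ℤ), (w : ZMod p) = r →
      TernaryIsotropic (a : ℚ_[p]) b ((-(p ^ i * w) : ℤ) : ℚ_[p]) ∧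
      ∃ (i' : ℕ) (r' : ℤ), ¬ (p : ℤ) ∣ r' ∧ ∀ w' : ℤ, (w' : ZMod p) = r' →
        TernaryIsotropic (c : ℚ_[p]) ((p ^ i' * w' : ℤ) : ℚ_[p]) ((p ^ i * w : ℤ) : ℚ_[p]) ∧
        TernaryIsotropic (d : ℚ_[p]) e ((-(p ^ i' * w') : ℤ) : ℚ_[p]) := by
    intro p
    by_cases hp : p ∈ P
    · have := Fact.mk (hP p hp).1
      obtain ⟨i, r, h⟩ := exists_localClasses (hP p hp).2 ha hb hc hd he
      exact ⟨i, r, fun _ => ⟨h.1, h.2⟩⟩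
    · exact ⟨0, 0, fun h => absurd h hp⟩
  choose I R hIR using hloc
  obtain ⟨k₁, k₂, hk₁, hk₂, hk₁k, hk₂k, hJk⟩ : ∃ k₁ k₂ : ℤ, k₁ % 4 = 3 ∧ k₂ % 2 = 1 ∧ k₁ ∣ k ∧
      k₂ ∣ k ∧ ∀ l : ℕ, J(k₁ | l) = 1 → J(2 * k₂ | l) = 1 → J(k | l) = 1 := by
    rcases hk with hk | ⟨k', rfl, hk'⟩
    · exact ⟨k, 1, hk, rfl, dvd_rfl, one_dvd _, fun l h _ => h⟩
    · exact ⟨-1, k', rfl, hk', by simp, dvd_mul_left _ _, fun l _ h => h⟩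
  have hk_dvd : k ∣ a * b * c * d * e :=
    Dvd.dvd.trans (by rw [← dvd_neg, hku]; exact dvd_mul_left _ _) hab_dvd
  have hk₃_dvd : k₃ ∣ a * b * c * d * e :=
    Dvd.dvd.trans (by rw [← dvd_neg, hku₃]; exact dvd_mul_left _ _) hde_dvd
  have hσ_dvd : ∀ p : ℕ, p.Prime → p ≠ 2 → ¬ (p : ℤ) ∣ σ := fun p hp hp2 h => by
    have := h.trans hσ2
    rw [show (2 : ℤ) = ((2 : ℕ) : ℤ) by rfl, Int.natCast_dvd_natCast,
      Nat.prime_dvd_prime_iff_eq hp Nat.prime_two] at this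
    exact hp2 this
  obtain ⟨l, τ, hl, hl2, hτ, hτP, htP, hJ₁, hJ₂⟩ := exists_prime_squareClass hP I
    (fun p hp => (hIR p hp).1) (fun p hp => hσ_dvd p (hP p hp).1 (hP p hp).2) hk₁ hk₂
    (hoddP k₁ (by omega) (hk₁k.trans hk_dvd)) (hoddP k₂ hk₂ (hk₂k.trans hk_dvd))
  set t : ℤ := σ * τ * l with ht
  have hl0 : (0 : ℤ) < l := by exact_mod_cast hl.pos
  have hσ0 : σ ≠ 0 := by
    rintro rfl
    simp at hσt
  have ht0 : t ≠ 0 := by positivity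
  have htR' : 0 < (t : ℝ) * tR := by
    have : (t : ℝ) * tR = σ * tR * (τ * l) := by rw [ht]; push_cast; ring
    rw [this]
    exact mul_pos hσt (by exact_mod_cast mul_pos hτ hl0)
  have htdvd : ∀ p : ℕ, p.Prime → p ≠ 2 → p ∉ P → p ≠ l → ¬ (p : ℤ) ∣ t := by
    intro p hp hp2 hpP hpl hdvd
    have hpp := Nat.prime_iff_prime_int.1 hp
    rcases hpp.dvd_or_dvd hdvd with h | h
    · rcases hpp.dvd_or_dvd h with h | h
      · exact hσ_dvd p hp hp2 h
      · exact hpP (hτP p hp h)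
    · rw [Int.natCast_dvd_natCast, Nat.prime_dvd_prime_iff_eq hp hl] at h
      exact hpl h
  -- the second auxiliary value `s`
  have hP' : ∀ p ∈ insert l P, p.Prime ∧ p ≠ 2 := fun p hp => by
    rcases Finset.mem_insert.1 hp with rfl | hp
    · exact ⟨hl, hl2⟩
    · exact hP p hp
  have hloc' : ∀ p : ℕ, ∃ (i : ℕ) (r : ℤ), p ∈ insert l P → ¬ (p : ℤ) ∣ r ∧
      ∀ [Fact p.Prime] (w : ℤ), (w : ZMod p) = r →
        TernaryIsotropic (c : ℚ_[p]) ((p ^ i * w : ℤ) : ℚ_[p]) (t : ℚ_[p]) ∧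
        TernaryIsotropic (d : ℚ_[p]) e ((-(p ^ i * w) : ℤ) : ℚ_[p]) := by
    intro p
    by_cases hpP : p ∈ P
    · have := Fact.mk (hP p hpP).1
      obtain ⟨w, hw, hwR⟩ := htP p hpP
      obtain ⟨i, r, h⟩ := ((hIR p hpP).2 w hwR).2
      rw [← hw] at h
      exact ⟨i, r, fun _ => ⟨h.1, h.2⟩⟩
    by_cases hpl : p = l
    · subst hpl
      have := Fact.mk hl
      have hnd : ∀ n : ℤ, n ∣ a * b * c * d * e → ¬ (p : ℤ) ∣ n := fun n hn h =>
        hpP (hdvdP p hl hl2 (h.trans hn))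
      have hcp : (-c : ℚ_[p]) ≠ 0 := neg_ne_zero.2 (by exact_mod_cast hc0)
      obtain ⟨i, r, hr, h⟩ := Padic.exists_squareClass hl2 hcp
      refine ⟨i, r, fun _ => ⟨hr, fun w hw => ⟨?_, ?_⟩⟩⟩
      · refine ternaryIsotropic_of_isSquare_neg_mul _ (by exact_mod_cast hc0) ?_
        have hprod : -((c : ℚ_[p]) * ((p ^ i * w : ℤ) : ℚ_[p])) =
            ((p ^ i * w : ℤ) : ℚ_[p]) * (-c) := by ring
        rw [hprod]
        exact h w hw
      · have hw0 : ((-(p ^ i * w) : ℤ) : ℚ_[p]) ≠ 0 := by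
          rw [Int.cast_ne_zero, neg_ne_zero]
          refine mul_ne_zero (pow_ne_zero _ (by exact_mod_cast hl.ne_zero)) ?_
          rintro rfl
          rw [Int.cast_zero] at hw
          exact hr ((ZMod.intCast_zmod_eq_zero_iff_dvd r p).1 hw.symm)
        refine TernaryIsotropic.congr_right hw0 (neg_ne_zero.1 hcp) ?_
          (ternaryIsotropic_padic_of_not_dvd hl2 (hnd d ⟨a * b * c * e, by ring⟩)
            (hnd e ⟨a * b * c * d, by ring⟩) (hnd c ⟨a * b * d * e, by ring⟩))
        have hprod : (c : ℚ_[p]) * ((-(p ^ i * w) : ℤ) : ℚ_[p]) =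
            ((p ^ i * w : ℤ) : ℚ_[p]) * (-c) := by
          rw [Int.cast_neg]
          ring
        rw [hprod]
        exact h w hw
    · exact ⟨0, 0, fun h => absurd h (by simp [hpl, hpP])⟩
  choose I' R' hIR' using hloc'
  have hk₄ : (-(c' * τ * l)) % 2 = 1 := by
    have hτ2 : τ % 2 = 1 := by
      by_contra h
      exact (hP 2 (hτP 2 Nat.prime_two (by push_cast; omega))).2 rfl
    have hll : (l : ℤ) % 2 = 1 := by
      have := hl.eq_two_or_odd.resolve_left hl2
      omega
    rw [← Int.odd_iff] at *
    exact ((hc'.mul hτ2).mul hll).neg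
  have hk₄P : ∀ p : ℕ, p.Prime → (p : ℤ) ∣ -(c' * τ * l) → p ∈ insert l P := by
    intro p hp h
    have hpp := Nat.prime_iff_prime_int.1 hp
    rw [dvd_neg] at h
    rcases hpp.dvd_or_dvd h with h | h
    · refine Finset.mem_insert_of_mem ?_
      rcases hpp.dvd_or_dvd h with h | h
      · have hp2 : p ≠ 2 := by
          rintro rfl
          push_cast at h
          omega
        have : (p : ℤ) ∣ c := (hpp.dvd_or_dvd (hcσ ▸ h.mul_left 2)).resolve_right
          (hσ_dvd p hp hp2)
        exact hdvdP p hp hp2 (this.trans ⟨a * b * d * e, by ring⟩)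
      · exact hτP p hp h
    · rw [Int.natCast_dvd_natCast, Nat.prime_dvd_prime_iff_eq hp hl] at h
      simp [h]
  have hε'_dvd : ∀ p : ℕ, p.Prime → ¬ (p : ℤ) ∣ ε' := fun p hp h =>
    (Nat.prime_iff_prime_int.1 hp).not_isUnit (isUnit_of_dvd_unit h (Int.isUnit_iff.2 hε'))
  obtain ⟨m, τ', hm, hm2, hτ', hτ'P, hsP, hJ₃, hJ₄⟩ := exists_prime_squareClass hP' I'
    (fun p hp => (hIR' p hp).1) (fun p hp => hε'_dvd p (hP' p hp).1) hk₃ hk₄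
    (fun p hp h => Finset.mem_insert_of_mem (hoddP k₃ (by omega) hk₃_dvd p hp h)) hk₄P
  set s : ℤ := ε' * τ' * m with hs
  have hm0 : (0 : ℤ) < m := by exact_mod_cast hm.pos
  have hε'0 : ε' ≠ 0 := by
    rintro rfl
    simp at hεs
  have hs0 : s ≠ 0 := by positivity
  have hsR' : 0 < (s : ℝ) * sR := by
    have : (s : ℝ) * sR = ε' * sR * (τ' * m) := by rw [hs]; push_cast; ring
    rw [this]
    exact mul_pos hεs (by exact_mod_cast mul_pos hτ' hm0)
  have hsdvd : ∀ p : ℕ, p.Prime → p ∉ insert l P → p ≠ m → ¬ (p : ℤ) ∣ s := by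
    intro p hp hpP hpm hdvd
    have hpp := Nat.prime_iff_prime_int.1 hp
    rcases hpp.dvd_or_dvd hdvd with h | h
    · rcases hpp.dvd_or_dvd h with h | h
      · exact hε'_dvd p hp h
      · exact hpP (hτ'P p hp h)
    · rw [Int.natCast_dvd_natCast, Nat.prime_dvd_prime_iff_eq hp hm] at h
      exact hpm h
  have hsq : ∀ {p : ℕ} [Fact p.Prime] {n k u : ℤ}, p ≠ 2 → n = u ^ 2 * k → J(k | p) = 1 →
      IsSquare (n : ℚ_[p]) := by
    rintro p _ n k u hp2 rfl hJ
    push_cast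
    exact (IsSquare.sq _).mul (Padic.isSquare_of_jacobiSym_eq_one hp2 hJ)
  have hnd : ∀ p : ℕ, p.Prime → p ≠ 2 → p ∉ P → ∀ n : ℤ, n ∣ a * b * c * d * e → ¬ (p : ℤ) ∣ n :=
    fun p hp hp2 hpP n hn h => hpP (hdvdP p hp hp2 (h.trans hn))
  have hdvda : a ∣ a * b * c * d * e := ⟨b * c * d * e, by ring⟩
  have hdvdb : b ∣ a * b * c * d * e := ⟨a * c * d * e, by ring⟩
  have hdvdc : c ∣ a * b * c * d * e := ⟨a * b * d * e, by ring⟩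
  have hdvdd : d ∣ a * b * c * d * e := ⟨a * b * c * e, by ring⟩
  have hdvde : e ∣ a * b * c * d * e := ⟨a * b * c * d, by ring⟩
  have iso₁ : LocallyIsotropic a b (-t) := by
    refine ⟨fun p hp hp2 => ?_, ?_⟩
    · by_cases hpP : p ∈ P
      · obtain ⟨w, hw, hwR⟩ := htP p hpP
        rw [hw]
        exact ((hIR p hpP).2 w hwR).1
      by_cases hpl : p = l
      · subst hpl
        refine ternaryIsotropic_of_isSquare_neg_mul _ (by exact_mod_cast ha0) ?_
        exact_mod_cast hsq hp2 hku (hJk p hJ₁ hJ₂)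
      have hn := hnd p hp.out hp2 hpP
      exact ternaryIsotropic_padic_of_not_dvd hp2 (hn a hdvda) (hn b hdvdb)
        (by rw [dvd_neg]; exact htdvd p hp.out hp2 hpP hpl)
    · rw [Int.cast_neg]
      refine hR₁.congr_right (neg_ne_zero.2 (by exact_mod_cast ht0)) (neg_ne_zero.2 htR) ?_
      rw [neg_mul_neg, mul_comm]
      exact isSquare_real_of_pos htR'
  have iso₂ : LocallyIsotropic c s t := by
    refine ⟨fun p hp hp2 => ?_, ?_⟩
    · by_cases hpP : p ∈ insert l P
      · obtain ⟨w, hw, hwR⟩ := hsP p hpP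
        rw [hw]
        exact ((hIR' p hpP).2 w hwR).1
      by_cases hpm : p = m
      · subst hpm
        refine (ternaryIsotropic_of_isSquare_neg_mul _ (by exact_mod_cast hc0) ?_).swap
        have : -(c * t) = 1 ^ 2 * (2 * -(c' * τ * l)) := by
          rw [ht]
          linear_combination (-τ * l) * hcσ
        exact_mod_cast hsq hp2 this hJ₄
      have hpP₀ : p ∉ P := fun h => hpP (Finset.mem_insert_of_mem h)
      have hn := hnd p hp.out hp2 hpP₀
      exact ternaryIsotropic_padic_of_not_dvd hp2 (hn c hdvdc) (hsdvd p hp.out hpP hpm)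
        (htdvd p hp.out hp2 hpP₀ fun h => hpP (by simp [h]))
    · have := hR₂.congr_right (c' := (t : ℝ)) (by exact_mod_cast ht0) htR
        (by rw [mul_comm]; exact isSquare_real_of_pos htR')
      exact (this.swap.congr_right (by exact_mod_cast hs0) hsR
        (by rw [mul_comm]; exact isSquare_real_of_pos hsR')).swap
  have iso₃ : LocallyIsotropic d e (-s) := by
    refine ⟨fun p hp hp2 => ?_, ?_⟩
    · by_cases hpP : p ∈ insert l P
      · obtain ⟨w, hw, hwR⟩ := hsP p hpP
        rw [hw]
        exact ((hIR' p hpP).2 w hwR).2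
      by_cases hpm : p = m
      · subst hpm
        refine ternaryIsotropic_of_isSquare_neg_mul _ (by exact_mod_cast hd0) ?_
        exact_mod_cast hsq hp2 hku₃ hJ₃
      have hn := hnd p hp.out hp2 fun h => hpP (Finset.mem_insert_of_mem h)
      exact ternaryIsotropic_padic_of_not_dvd hp2 (hn d hdvdd) (hn e hdvde)
        (by rw [dvd_neg]; exact hsdvd p hp.out hpP hpm)
    · rw [Int.cast_neg]
      refine hR₃.congr_right (neg_ne_zero.2 (by exact_mod_cast hs0)) (neg_ne_zero.2 hsR) ?_
      rw [neg_mul_neg, mul_comm]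
      exact isSquare_real_of_pos hsR'
  refine diagonalIsotropic_of_ternaryIsotropic (t := (t : ℚ)) (s := (s : ℚ))
    (by exact_mod_cast ht0) (by exact_mod_cast hs0) ?_ ?_ ?_
  · exact_mod_cast ternaryIsotropic_of_locallyIsotropic ha0 hb0 (neg_ne_zero.2 ht0) iso₁
  · exact ternaryIsotropic_of_locallyIsotropic hc0 hs0 ht0 iso₂
  · exact_mod_cast ternaryIsotropic_of_locallyIsotropic hd0 he0 (neg_ne_zero.2 hs0) iso₃

end RankFive

section Assembly

theorem Rat.exists_squarefree_mul_sq {a : ℚ} (ha : a ≠ 0) :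
    ∃ (z : ℤ) (q : ℚ), Squarefree z ∧ q ≠ 0 ∧ a = z * q ^ 2 := by
  have hden : (a.den : ℚ) ≠ 0 := by exact_mod_cast a.den_nz
  have hm : 0 < (a.num * a.den).natAbs :=
    Int.natAbs_pos.2 (mul_ne_zero (Rat.num_ne_zero.2 ha) (by exact_mod_cast a.den_nz))
  obtain ⟨s, b, hs, hb, hsb, hsq⟩ := Nat.sq_mul_squarefree_of_pos hm
  have hnum : (a.num : ℚ) * a.den = (a.num * a.den).sign * (b ^ 2 * s) := by
    have h := Int.sign_mul_natAbs (a.num * a.den)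
    rw [← hsb] at h
    exact_mod_cast h.symm
  refine ⟨(a.num * a.den).sign * s, b / a.den, ?_, div_ne_zero (by exact_mod_cast hb.ne') hden, ?_⟩
  · rw [← Int.squarefree_natAbs, Int.natAbs_mul, Int.natAbs_sign_of_ne_zero, one_mul,
      Int.natAbs_natCast]
    · exact hsq
    · exact Int.natAbs_pos.1 hm
  · calc a = a.num * a.den / a.den ^ 2 := by
          conv_lhs => rw [← Rat.num_div_den a]
          field_simp
      _ = _ := by
          rw [hnum]
          push_cast
          field_simp

theorem diagonalIsotropic_real_of_pos_of_neg {ι : Type*} [Fintype ι] {a : ι → ℝ} {i j : ι}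
    (hi : 0 < a i) (hj : a j < 0) : DiagonalIsotropic a := by
  have hij : i ≠ j := by
    rintro rfl
    exact hi.not_gt hj
  refine DiagonalIsotropic.of_comp (f := ![i, j]) ?_ ⟨![√(-a j), √(a i)], ?_, ?_⟩
  · intro x y
    fin_cases x <;> fin_cases y <;> simp [hij, hij.symm]
  · intro h
    exact (Real.sqrt_pos.2 hi).ne' (congrFun h 1)
  · simp only [Fin.sum_univ_two, Function.comp_apply, Matrix.cons_val_zero, Matrix.cons_val_one]
    rw [Real.sq_sqrt (by linarith), Real.sq_sqrt hi.le]
    ring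

/-- The odd part of a squarefree integer. -/
def Int.squarefreeOddPart (z : ℤ) : ℤ := if z % 2 = 0 then z / 2 else z

/-- The class of a squarefree integer in `ℚ₂ˣ`, recording the parity of its valuation and the
residue of its odd part modulo `4`. -/
def Int.dyadicClass (z : ℤ) : Bool × Bool :=
  (decide (z % 2 = 0), decide (z.squarefreeOddPart % 4 = 1))

theorem Int.squarefreeOddPart_odd {z : ℤ} (hz : Squarefree z) : z.squarefreeOddPart % 2 = 1 := by
  unfold squarefreeOddPart
  split_ifs with h
  · by_contra h'
    have := Int.isUnit_iff.1 (hz 2 ⟨z / 4, by omega⟩)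
    omega
  · omega

theorem Int.eq_two_mul_squarefreeOddPart {z : ℤ} (h : z % 2 = 0) :
    z = 2 * z.squarefreeOddPart := by
  rw [squarefreeOddPart, if_pos h]
  omega

theorem Int.squarefreeOddPart_of_odd {z : ℤ} (h : ¬ z % 2 = 0) : z.squarefreeOddPart = z :=
  if_neg h

theorem Int.neg_mul_emod_four {x y : ℤ} (hx : x % 2 = 1) (hy : y % 2 = 1)
    (h : x % 4 = 1 ↔ y % 4 = 1) : -(x * y) % 4 = 3 := by
  have hxy : x * y % 4 = 1 := by
    rcases (by omega : x % 4 = 1 ∧ y % 4 = 1 ∨ x % 4 = 3 ∧ y % 4 = 3) with h | h <;>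
      simp [Int.mul_emod, h.1, h.2]
  omega

theorem Int.exists_neg_mul_eq_of_dyadicClass_eq {x y : ℤ} (hx : Squarefree x) (hy : Squarefree y)
    (h : x.dyadicClass = y.dyadicClass) : ∃ k u : ℤ, -(x * y) = u ^ 2 * k ∧ k % 4 = 3 := by
  simp only [dyadicClass, Prod.mk.injEq, decide_eq_decide] at h
  have hk := neg_mul_emod_four (squarefreeOddPart_odd hx) (squarefreeOddPart_odd hy) h.2
  by_cases hx2 : x % 2 = 0
  · refine ⟨_, 2, ?_, hk⟩
    conv_lhs => rw [eq_two_mul_squarefreeOddPart hx2, eq_two_mul_squarefreeOddPart (h.1.1 hx2)]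
    ring
  · rw [squarefreeOddPart_of_odd hx2, squarefreeOddPart_of_odd (mt h.1.2 hx2)] at hk
    exact ⟨_, 1, by ring, hk⟩

theorem Int.exists_neg_mul_eq_of_even_of_odd {x y : ℤ} (hx : Squarefree x)
    (hx2 : x % 2 = 0) (hy2 : ¬ y % 2 = 0) :
    ∃ k u : ℤ, -(x * y) = u ^ 2 * k ∧ ∃ k', k = 2 * k' ∧ k' % 2 = 1 := by
  refine ⟨-(x * y), 1, by ring, -(x.squarefreeOddPart * y), ?_, ?_⟩
  · conv_lhs => rw [eq_two_mul_squarefreeOddPart hx2]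
    ring
  · have : x.squarefreeOddPart * y % 2 = 1 := by
      simp [Int.mul_emod, squarefreeOddPart_odd hx, (by omega : y % 2 = 1)]
    omega

theorem Int.exists_neg_mul_eq_of_dyadicClass {x y : ℤ} (hx : Squarefree x) (hy : Squarefree y)
    (h : x.dyadicClass.1 ≠ y.dyadicClass.1 ∨ x.dyadicClass = y.dyadicClass) :
    ∃ k u : ℤ, -(x * y) = u ^ 2 * k ∧ (k % 4 = 3 ∨ ∃ k', k = 2 * k' ∧ k' % 2 = 1) := by
  rcases h with h | h
  · simp only [dyadicClass, ne_eq, decide_eq_decide] at h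
    by_cases hx2 : x % 2 = 0
    · obtain ⟨k, u, hk, hk'⟩ := exists_neg_mul_eq_of_even_of_odd hx hx2 (y := y) (by tauto)
      exact ⟨k, u, hk, Or.inr hk'⟩
    · obtain ⟨k, u, hk, hk'⟩ := exists_neg_mul_eq_of_even_of_odd hy (by tauto) hx2
      exact ⟨k, u, by rw [mul_comm, hk], Or.inr hk'⟩
  · obtain ⟨k, u, hk, hk'⟩ := exists_neg_mul_eq_of_dyadicClass_eq hx hy h
    exact ⟨k, u, hk, Or.inl hk'⟩

theorem exists_injective_pairing (g : Fin 5 → Bool × Bool) :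
    ∃ σ : Fin 5 → Fin 5, σ.Injective ∧ ((g (σ 0)).1 ≠ (g (σ 1)).1 ∨ g (σ 0) = g (σ 1)) ∧
      g (σ 3) = g (σ 4) := by
  obtain ⟨x, y, hxy, hg⟩ := Fintype.exists_ne_map_eq_of_card_lt g (by simp)
  obtain ⟨p, q, r, h₁, h₂, h₃⟩ : ∃ p q r : Fin 5, Function.Injective ![p, q, r, x, y] ∧
      Function.Injective ![p, r, q, x, y] ∧ Function.Injective ![q, r, p, x, y] := by
    clear hg
    revert x y
    decide
  have hbool : ∀ u v w : Bool × Bool, (u.1 ≠ v.1 ∨ u = v) ∨ (u.1 ≠ w.1 ∨ u = w) ∨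
      (v.1 ≠ w.1 ∨ v = w) := by decide
  rcases hbool (g p) (g q) (g r) with h | h | h
  · exact ⟨_, h₁, h, hg⟩
  · exact ⟨_, h₂, h, hg⟩
  · exact ⟨_, h₃, h, hg⟩

theorem diagonalIsotropic_rat_of_pos_of_neg {z : Fin 5 → ℤ} (hz : ∀ k, Squarefree (z k))
    {i j : Fin 5} (hi : 0 < z i) (hj : z j < 0) : DiagonalIsotropic fun k => (z k : ℚ) := by
  obtain ⟨σ, hσ, hab, hde⟩ := exists_injective_pairing fun k => (z k).dyadicClass
  obtain ⟨i', rfl⟩ := (Finite.injective_iff_surjective.1 hσ) i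
  obtain ⟨j', rfl⟩ := (Finite.injective_iff_surjective.1 hσ) j
  have hcomp : ∀ {K : Type} [Field K], (fun k => (z (σ k) : K)) =
      ![(z (σ 0) : K), z (σ 1), z (σ 2), z (σ 3), z (σ 4)] := by
    intro K _
    funext k
    fin_cases k <;> rfl
  have hreal : DiagonalIsotropic fun k => (z (σ k) : ℝ) :=
    diagonalIsotropic_real_of_pos_of_neg (i := i') (j := j') (by exact_mod_cast hi)
      (by exact_mod_cast hj)
  refine DiagonalIsotropic.of_comp hσ ?_
  change DiagonalIsotropic fun k => (z (σ k) : ℚ)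
  rw [hcomp] at hreal ⊢
  exact diagonalIsotropic_rat_of_real (hz _) (hz _) (hz _) (hz _) (hz _)
    (Int.exists_neg_mul_eq_of_dyadicClass (hz _) (hz _) hab)
    (Int.exists_neg_mul_eq_of_dyadicClass_eq (hz _) (hz _) hde) hreal

end Assembly

/-- Meyer's theorem: every nondegenerate indefinite diagonal quadratic form over ℚ
of rank at least 5 is isotropic. -/
theorem meyer_indefinite_rank_five_isotropic
    (n : ℕ) (hn : 5 ≤ n) (a : Fin n → ℚ) (ha : ∀ i, a i ≠ 0)
    (i j : Fin n) (hi : 0 < a i) (hj : a j < 0) :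
    ∃ x : Fin n → ℚ, x ≠ 0 ∧ ∑ k, a k * (x k) ^ 2 = 0 := by
  choose z q hz hq haz using fun k => Rat.exists_squarefree_mul_sq (ha k)
  obtain ⟨S, hS, hcard⟩ := Finset.exists_superset_card_eq (s := {i, j}) (n := 5)
    (Finset.card_le_two.trans (by norm_num)) (by simpa using hn)
  have hsurj : ∀ k ∈ S, ∃ k', S.orderEmbOfFin hcard k' = k := fun k hk => by
    rw [← Set.mem_range, Finset.range_orderEmbOfFin]
    exact hk
  obtain ⟨i', hi'⟩ := hsurj i (hS (by simp))
  obtain ⟨j', hj'⟩ := hsurj j (hS (by simp))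
  have hzi : 0 < z i := by
    rw [haz] at hi
    exact_mod_cast pos_of_mul_pos_left hi (sq_nonneg _)
  have hzj : z j < 0 := by
    rw [haz] at hj
    exact_mod_cast neg_of_mul_neg_left hj (sq_nonneg _)
  have hfive := diagonalIsotropic_rat_of_pos_of_neg (fun k => hz (S.orderEmbOfFin hcard k))
    (i := i') (j := j') (by rwa [hi']) (by rwa [hj'])
  exact (DiagonalIsotropic.of_comp (a := fun k => (z k : ℚ))
    (S.orderEmbOfFin hcard).injective hfive).of_mul_sq hq haz
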